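/- The restriction of R^J to X_{fJ} is injective, and for every φ∈X_{fJ} the derivative DR^J(φ) defines a (topological) isomorphism from the tangent space T_φX_f onto X_0. -/

import Mathlib

open Set

noncomputable section

/-- The compact interval `[-r,0]`. -/
abbrev Icc0 (r : ℝ) : Set ℝ := Set.Icc (-r) 0

/-- Extension of a continuous map on `[-r,0]` to `ℝ`, by the value `0` outside. -/
def extFun {r : ℝ} {E : Type*} [TopologicalSpace E] [Zero E] (φ : C(Icc0 r, E)) : ℝ → E :=
  fun t => if h : t ∈ Icc0 r then φ ⟨t, h⟩ else 0

section extlemmas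

variable {r : ℝ} {E : Type*} [NormedAddCommGroup E] [NormedSpace ℝ E]

lemma extFun_add (φ ψ : C(Icc0 r, E)) : extFun (φ + ψ) = extFun φ + extFun ψ := by
  funext t; by_cases h : t ∈ Icc0 r <;> simp [extFun, h]

lemma extFun_zero : extFun (0 : C(Icc0 r, E)) = 0 := by
  funext t; by_cases h : t ∈ Icc0 r <;> simp [extFun, h]

lemma extFun_smul (c : ℝ) (φ : C(Icc0 r, E)) : extFun (c • φ) = c • extFun φ := by
  funext t; by_cases h : t ∈ Icc0 r <;> simp [extFun, h]

end extlemmas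

/-- The space `C¹([-r,0],E)`, realized as the closed subspace of pairs `(φ, φ')` in
`C([-r,0],E) × C([-r,0],E)` such that `φ` is differentiable on `[-r,0]` with derivative `φ'`. -/
def C1sub (r : ℝ) (E : Type*) [NormedAddCommGroup E] [NormedSpace ℝ E] :
    Submodule ℝ (C(Icc0 r, E) × C(Icc0 r, E)) where
  carrier := {p | ∀ t ∈ Icc0 r, HasDerivWithinAt (extFun p.1) (extFun p.2 t) (Icc0 r) t}
  add_mem' := by
    intro p q hp hq t ht
    have h := (hp t ht).add (hq t ht)
    have e1 : extFun (p + q).1 = fun s => extFun p.1 s + extFun q.1 s := by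
      simp [Prod.fst_add, extFun_add]; rfl
    have e2 : extFun (p + q).2 t = extFun p.2 t + extFun q.2 t := by
      simp [Prod.snd_add, extFun_add]
    rw [e1, e2]; exact h
  zero_mem' := by
    intro t ht
    have e1 : extFun (0 : C(Icc0 r, E) × C(Icc0 r, E)).1 = fun _ : ℝ => (0 : E) := by
      simp [extFun_zero]; rfl
    have e2 : extFun (0 : C(Icc0 r, E) × C(Icc0 r, E)).2 t = 0 := by
      simp [extFun_zero]
    rw [e1, e2]; exact hasDerivWithinAt_const _ _ _
  smul_mem' := by
    intro c p hp t ht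
    have h := (hp t ht).const_smul c
    have e1 : extFun (c • p).1 = fun s => c • extFun p.1 s := by
      simp [Prod.smul_fst, extFun_smul]; rfl
    have e2 : extFun (c • p).2 t = c • extFun p.2 t := by
      simp [Prod.smul_snd, extFun_smul]
    rw [e1, e2]; exact h

/-- The Banach space `C¹([-r,0],E)`. -/
abbrev C1 (r : ℝ) (E : Type*) [NormedAddCommGroup E] [NormedSpace ℝ E] := ↥(C1sub r E)

section C1ops

variable {r : ℝ} {E : Type*} [NormedAddCommGroup E] [NormedSpace ℝ E]

/-- Evaluation `φ(t)` of `φ ∈ C¹([-r,0],E)` (extended by `0` outside `[-r,0]`). -/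
def evC (φ : C1 r E) (t : ℝ) : E := extFun φ.1.1 t

/-- Evaluation `φ'(t)` of the derivative of `φ ∈ C¹([-r,0],E)`. -/
def dvC (φ : C1 r E) (t : ℝ) : E := extFun φ.1.2 t

end C1ops

/-- The continuous linear map `ℝ → (Fin n → ℝ)` sending `x` to the vector `x·e_ν`. -/
def sCLM (n : ℕ) (ν : Fin n) : ℝ →L[ℝ] (Fin n → ℝ) :=
  ContinuousLinearMap.pi (fun j => if j = ν then ContinuousLinearMap.id ℝ ℝ else 0)

/-- `ψ · e_ν` for a continuous map `ψ`. -/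
def CMsingle {r : ℝ} {n : ℕ} (ν : Fin n) (φ : C(Icc0 r, ℝ)) : C(Icc0 r, Fin n → ℝ) :=
  ⟨fun t => sCLM n ν (φ t), (sCLM n ν).continuous.comp φ.continuous⟩

lemma extFun_CMsingle {r : ℝ} {n : ℕ} (ν : Fin n) (φ : C(Icc0 r, ℝ)) (t : ℝ) :
    extFun (CMsingle ν φ) t = sCLM n ν (extFun φ t) := by
  by_cases h : t ∈ Icc0 r <;> simp [extFun, CMsingle, h]

/-- `ψ · e_ν ∈ C¹([-r,0],ℝⁿ)` for a scalar function `ψ ∈ C¹([-r,0],ℝ)`. -/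
def singleC1 {r : ℝ} {n : ℕ} (ν : Fin n) (φ : C1 r ℝ) : C1 r (Fin n → ℝ) :=
  ⟨(CMsingle ν φ.1.1, CMsingle ν φ.1.2), by
    intro t ht
    have h := ((sCLM n ν).hasFDerivAt).comp_hasDerivWithinAt t (φ.2 t ht)
    have e1 : extFun (CMsingle ν φ.1.1) = (sCLM n ν) ∘ (extFun φ.1.1) := by
      funext s; exact extFun_CMsingle ν φ.1.1 s
    rw [show (CMsingle ν φ.1.1, CMsingle ν φ.1.2).1 = CMsingle ν φ.1.1 from rfl,
      show (CMsingle ν φ.1.1, CMsingle ν φ.1.2).2 = CMsingle ν φ.1.2 from rfl,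
      e1, extFun_CMsingle]
    exact h⟩

/-- The linear map `ℝⁿ → C¹([-r,0],ℝⁿ)`, `x ↦ Σ_ν x_ν ψ_ν · e_ν` (the map `Y·x`). -/
def Ymap {r : ℝ} {n : ℕ} (ψ : Fin n → C1 r ℝ) : (Fin n → ℝ) →ₗ[ℝ] C1 r (Fin n → ℝ) where
  toFun x := ∑ ν, x ν • singleC1 ν (ψ ν)
  map_add' x y := by simp [add_smul, Finset.sum_add_distrib]
  map_smul' c x := by simp [smul_smul, Finset.smul_sum]

/-- The closed subspace `X₀ = {φ ∈ C¹ : φ'(0) = 0}`. -/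
def X0sub (r : ℝ) (n : ℕ) : Submodule ℝ (C1 r (Fin n → ℝ)) where
  carrier := {φ | dvC φ 0 = 0}
  add_mem' := by
    intro φ ψ hφ hψ
    have : dvC (φ + ψ) 0 = dvC φ 0 + dvC ψ 0 := by
      simp [dvC, extFun_add]
    rw [Set.mem_setOf_eq] at *
    rw [this, hφ, hψ, add_zero]
  zero_mem' := by
    show dvC (0 : C1 r (Fin n → ℝ)) 0 = 0
    simp [dvC, extFun_zero]
  smul_mem' := by
    intro c φ hφ
    have : dvC (c • φ) 0 = c • dvC φ 0 := by simp [dvC, extFun_smul]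
    rw [Set.mem_setOf_eq] at *
    rw [this, hφ, smul_zero]

/-- The projection-like map `R φ = φ − Y·φ'(0)`. -/
def RKmap {r : ℝ} {n : ℕ} (ψ : Fin n → C1 r ℝ) (φ : C1 r (Fin n → ℝ)) : C1 r (Fin n → ℝ) :=
  φ - Ymap ψ (dvC φ 0)

section diffeos

variable {E : Type*} [NormedAddCommGroup E] [NormedSpace ℝ E]
variable {E' : Type*} [NormedAddCommGroup E'] [NormedSpace ℝ E']

/-- `f` defines a `C¹`-diffeomorphism from `s` onto `t`: `f` is continuously differentiable
on `s`, injective on `s`, maps `s` onto `t`, and has a continuously differentiable inverse. -/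
def IsC1DiffeoOn (f : E → E') (s : Set E) (t : Set E') : Prop :=
  ContDiffOn ℝ 1 f s ∧ Set.InjOn f s ∧ f '' s = t ∧
    ∃ g : E' → E, ContDiffOn ℝ 1 g t ∧ Set.InvOn g f s t

/-- The tangent cone of `X ⊆ E` at `x`: all velocities `c'(0)` of continuously differentiable
curves in `X` through `x`. -/
def tangentSet (X : Set E) (x : E) : Set E :=
  {v | ∃ (c : ℝ → E) (ε : ℝ), 0 < ε ∧ ContDiffOn ℝ 1 c (Set.Ioo (-ε) ε) ∧
      (∀ s ∈ Set.Ioo (-ε) ε, c s ∈ X) ∧ c 0 = x ∧ HasDerivWithinAt c v (Set.Ioo (-ε) ε) 0}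

/-- `X` is a continuously differentiable submanifold of codimension `m` of `E`. -/
def IsC1SubmanifoldCodim (X : Set E) (m : ℕ) : Prop :=
  ∀ x ∈ X, ∃ (O : Set E) (Φ : E → E) (H Q : Submodule ℝ E),
    IsOpen O ∧ x ∈ O ∧ IsClosed (H : Set E) ∧ IsCompl H Q ∧ Module.finrank ℝ Q = m ∧
    IsOpen (Φ '' O) ∧ IsC1DiffeoOn Φ O (Φ '' O) ∧ Φ '' (X ∩ O) = (H : Set E) ∩ (Φ '' O)

/-- `X` is a continuously differentiable submanifold of `E`. -/
def IsC1Submanifold (X : Set E) : Prop :=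
  ∀ x ∈ X, ∃ (O : Set E) (Φ : E → E) (H : Submodule ℝ E),
    IsOpen O ∧ x ∈ O ∧ IsClosed (H : Set E) ∧
    IsOpen (Φ '' O) ∧ IsC1DiffeoOn Φ O (Φ '' O) ∧ Φ '' (X ∩ O) = (H : Set E) ∩ (Φ '' O)

/-- `A` is an almost graph over `H`. -/
def IsAlmostGraphOver (A : Set E) (H : Set E) : Prop :=
  ∃ (dm : Set E) (α : E → E), dm ⊆ H ∧ ContDiffOn ℝ 1 α dm ∧
    (∀ ζ ∈ dm ∩ A, α ζ = 0) ∧ (∀ ζ ∈ dm \ A, α ζ ∉ H) ∧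
    IsC1DiffeoOn (fun ζ => ζ + α ζ) dm A

end diffeos

/-- The data of the delay differential system
`x'(t) = g(x(t-d_1(Lx_t)),…,x(t-d_kk(Lx_t)))`. -/
structure Setting (r : ℝ) (n kk : ℕ) (F : Type*) [NormedAddCommGroup F] [NormedSpace ℝ F] where
  /-- The continuous linear map `L : C([-r,0],ℝⁿ) → F`. -/
  L : C(Icc0 r, Fin n → ℝ) →L[ℝ] F
  /-- The open set `W ⊆ F`. -/
  W : Set F
  Wopen : IsOpen W
  /-- The delay functions `d_k : W → [0,r]`. -/
  d : Fin kk → F → ℝ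
  d_smooth : ∀ k, ContDiffOn ℝ 1 (d k) W
  d_mem : ∀ k, ∀ w ∈ W, d k w ∈ Set.Icc (0:ℝ) r
  /-- The open set `V ⊆ (ℝⁿ)^kk`. -/
  V : Set (Fin kk → Fin n → ℝ)
  Vopen : IsOpen V
  /-- The right hand side function `g : V → ℝⁿ`. -/
  g : (Fin kk → Fin n → ℝ) → Fin n → ℝ
  g_smooth : ContDiffOn ℝ 1 g V

namespace Setting

variable {r : ℝ} {n kk : ℕ} {F : Type*} [NormedAddCommGroup F] [NormedSpace ℝ F]
variable (S : Setting r n kk F)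

/-- `L` applied to (the `C⁰`-part of) `φ ∈ C¹`. -/
def Lof (φ : C1 r (Fin n → ℝ)) : F := S.L φ.1.1

/-- `φ̂ = (φ(-d_1(Lφ)),…,φ(-d_kk(Lφ)))`. -/
def hat (φ : C1 r (Fin n → ℝ)) : Fin kk → Fin n → ℝ := fun k => evC φ (-(S.d k (S.Lof φ)))

/-- The domain `U = {φ ∈ C¹ : Lφ ∈ W, φ̂ ∈ V}`. -/
def U : Set (C1 r (Fin n → ℝ)) := {φ | S.Lof φ ∈ S.W ∧ S.hat φ ∈ S.V}

/-- The right hand side `f(φ) = g(φ̂)`. -/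
def fmap (φ : C1 r (Fin n → ℝ)) : Fin n → ℝ := S.g (S.hat φ)

/-- The solution manifold `X_f = {φ ∈ U : φ'(0) = f(φ)}`. -/
def Xf : Set (C1 r (Fin n → ℝ)) := {φ | φ ∈ S.U ∧ dvC φ 0 = S.fmap φ}

/-- `W_J = {w ∈ W : d_j(w)=0 for j∈J, d_k(w)>0 for k∉J}`. -/
def WJ (J : Finset (Fin kk)) : Set F :=
  {w | w ∈ S.W ∧ (∀ j ∈ J, S.d j w = 0) ∧ ∀ k ∉ J, 0 < S.d k w}

/-- `W^J = {w ∈ W : d_k(w)>0 for k∉J}`. -/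
def WupJ (J : Finset (Fin kk)) : Set F :=
  {w | w ∈ S.W ∧ ∀ k ∉ J, 0 < S.d k w}

/-- `U_J = U ∩ L⁻¹(W_J)`. -/
def UJ (J : Finset (Fin kk)) : Set (C1 r (Fin n → ℝ)) := {φ | φ ∈ S.U ∧ S.Lof φ ∈ S.WJ J}

/-- `U^J = U ∩ L⁻¹(W^J)`. -/
def UupJ (J : Finset (Fin kk)) : Set (C1 r (Fin n → ℝ)) := {φ | φ ∈ S.U ∧ S.Lof φ ∈ S.WupJ J}

/-- `X_{fJ} = X_f ∩ U_J`. -/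
def XfJ (J : Finset (Fin kk)) : Set (C1 r (Fin n → ℝ)) := S.Xf ∩ S.UJ J

/-- Hypothesis (b): `g` is bounded. -/
def HypB : Prop := ∃ M, ∀ v ∈ S.V, ‖S.g v‖ ≤ M

/-- Hypothesis (d1b): `d₁ = 0` on `W` and `g` is bounded on subsets of `V` with bounded
first component. -/
def HypD1B (hk : 0 < kk) : Prop :=
  (∀ w ∈ S.W, S.d ⟨0, hk⟩ w = 0) ∧
  ∀ B : Set (Fin n → ℝ), Bornology.IsBounded B →
    Bornology.IsBounded (S.g '' {v | v ∈ S.V ∧ v ⟨0, hk⟩ ∈ B})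

/-- The partial derivative `∂_{(k-1)n+ν} g_μ (φ̂)`. -/
def dgCoeff (φ : C1 r (Fin n → ℝ)) (k : Fin kk) (ν : Fin n) (μ : Fin n) : ℝ :=
  fderivWithin ℝ S.g S.V (S.hat φ) (Pi.single k (Pi.single ν 1)) μ

/-- The right hand side of the formula for `Df_μ(φ)χ`. -/
def dFormula (φ χ : C1 r (Fin n → ℝ)) (μ : Fin n) : ℝ :=
  ∑ k, ∑ ν, S.dgCoeff φ k ν μ *
    (evC χ (-(S.d k (S.Lof φ))) ν -
      dvC φ (-(S.d k (S.Lof φ))) ν * fderivWithin ℝ (S.d k) S.W (S.Lof φ) (S.Lof χ))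

/-- The map `R^J(φ) = φ − Y_J(Lφ)·φ'(0)` of Section 4 of the paper. -/
def RJmap (y : Fin n → F → C1 r ℝ) (φ : C1 r (Fin n → ℝ)) : C1 r (Fin n → ℝ) :=
  φ - Ymap (fun ν => y ν (S.Lof φ)) (dvC φ 0)

end Setting


variable {r : ℝ} {n kk : ℕ} {F : Type*} [NormedAddCommGroup F] [NormedSpace ℝ F]
  [FiniteDimensional ℝ F]

/-!
A direction `ζ` with `Lζ = 0` that vanishes at all delayed arguments `-d_k(Lφ)` changes neither
`Lφ` nor `φ̂`, hence not `f(φ)`. For `φ ∈ U_J` the directions `Y_J(Lφ)·x` are of this kind, so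
`R^J` preserves `L` and `f`, and `φ ∈ X_{fJ}` is recovered from `ψ = R^J(φ)` as
`φ = ψ + Y_J(Lψ)·f(ψ)`.

Differentiating `w ↦ Y_J(w)·x` gives directions of the same kind. Hence, with `δχ = χ'(0)`,
`Y = Y_J(Lφ)` and `Bχ = (DY_J(Lφ)(Lχ))·φ'(0)`, the maps `DR^J(φ) = id - (Y ∘ δ + B)` and
`id + (Y ∘ Df(φ) + B)` are inverse to each other between `{δ = Df(φ)}` and `{δ = 0}`. The former
is `T_φX_f` by the implicit function theorem, as `Y` is a right inverse of `δ - Df(φ)`.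
-/

open Filter Topology

section LinearAlgebra

variable {R X E : Type*} [Ring R] [AddCommGroup X] [Module R X] [TopologicalSpace X]
  [IsTopologicalAddGroup X] [AddCommGroup E] [Module R E] [TopologicalSpace E]

lemma mapsTo_id_sub {A : E →L[R] X} {B : X →L[R] X} {δ : X →L[R] E} (hδA : ∀ x, δ (A x) = x)
    (hδB : ∀ χ, δ (B χ) = 0) (s : Set X) :
    MapsTo (ContinuousLinearMap.id R X - (A ∘L δ + B)) s {η | δ η = 0} := by
  intro χ _
  simp [hδA, hδB]

lemma mapsTo_id_add {A : E →L[R] X} {B : X →L[R] X} {δ D : X →L[R] E} (hδA : ∀ x, δ (A x) = x)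
    (hDA : ∀ x, D (A x) = 0) (hδB : ∀ χ, δ (B χ) = 0) (hDB : ∀ χ, D (B χ) = 0) :
    MapsTo (ContinuousLinearMap.id R X + (A ∘L D + B)) {η | δ η = 0} {χ | δ χ = D χ} := by
  intro η (hη : δ η = 0)
  simp [hδA, hDA, hδB, hDB, hη]

lemma invOn_id_add_id_sub {A : E →L[R] X} {B : X →L[R] X} {δ D : X →L[R] E}
    (hδA : ∀ x, δ (A x) = x) (hDA : ∀ x, D (A x) = 0) (hδB : ∀ χ, δ (B χ) = 0)
    (hDB : ∀ χ, D (B χ) = 0) (hBA : ∀ x, B (A x) = 0) (hBB : ∀ χ, B (B χ) = 0) :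
    InvOn (ContinuousLinearMap.id R X + (A ∘L D + B)) (ContinuousLinearMap.id R X - (A ∘L δ + B))
      {χ | δ χ = D χ} {η | δ η = 0} := by
  constructor
  · intro χ (hχ : δ χ = D χ)
    simp [hDA, hDB, hBA, hBB, hχ]
  · intro η (hη : δ η = 0)
    simp [hδA, hδB, hBA, hBB, hη]

end LinearAlgebra

section Calculus

variable {X E G : Type*} [NormedAddCommGroup X] [NormedSpace ℝ X] [NormedAddCommGroup E]
  [NormedSpace ℝ E] [NormedAddCommGroup G] [NormedSpace ℝ G]

lemma contDiffOn_one_of_hasFDerivWithinAt {f : X → E} {f' : X → X →L[ℝ] E} {s : Set X}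
    (hf : ∀ x ∈ s, HasFDerivWithinAt f (f' x) s x) (hf' : ContinuousOn f' s) :
    ContDiffOn ℝ 1 f s := by
  rw [← zero_add (1 : WithTop ℕ∞), contDiffOn_succ_iff_hasFDerivWithinAt (by simp)]
  intro x hx
  rw [insert_eq_of_mem hx]
  exact ⟨s, self_mem_nhdsWithin, by simp, f', hf, contDiffOn_zero.2 hf'⟩

lemma hasFDerivWithinAt_clm_apply_prod {c : G → X →L[ℝ] E} {s : Set G} {p : X × G}
    {c' : G →L[ℝ] E} (hc : ContinuousWithinAt c s p.2)
    (hc' : HasFDerivWithinAt (fun g => c g p.1) c' s p.2) :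
    HasFDerivWithinAt (fun q : X × G => c q.2 q.1) ((c p.2).coprod c') (univ ×ˢ s) p := by
  have hsnd : MapsTo Prod.snd ((univ : Set X) ×ˢ s) s := fun q hq => hq.2
  have hmixed : (fun q : X × G => (c q.2 - c p.2) (q.1 - p.1)) =o[𝓝[univ ×ˢ s] p]
      fun q => q - p := by
    have hsmall : (fun q : X × G => c q.2 - c p.2) =o[𝓝[univ ×ˢ s] p] fun _ => (1 : ℝ) := by
      rw [Asymptotics.isLittleO_one_iff, tendsto_sub_nhds_zero_iff]
      exact hc.comp continuousWithinAt_snd hsnd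
    have hbound : (fun q : X × G => (c q.2 - c p.2) (q.1 - p.1)) =O[𝓝[univ ×ˢ s] p]
        fun q => ‖c q.2 - c p.2‖ * ‖q - p‖ :=
      .of_norm_le fun q => ((c q.2 - c p.2).le_opNorm _).trans <| by
        gcongr
        exact norm_fst_le (q - p)
    refine hbound.trans_isLittleO ?_
    simpa using hsmall.norm_left.mul_isBigO (Asymptotics.isBigO_refl (fun q => ‖q - p‖) _)
  have hfrozen : HasFDerivWithinAt (fun q : X × G => c p.2 (q.1 - p.1) + c q.2 p.1)
      ((c p.2).coprod c') (univ ×ˢ s) p := by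
    have hlin : HasFDerivWithinAt (fun q : X × G => c p.2 (q.1 - p.1))
        (c p.2 ∘L .fst ℝ X G) (univ ×ˢ s) p :=
      (c p.2).hasFDerivAt.comp_hasFDerivWithinAt p (hasFDerivWithinAt_fst.sub_const p.1)
    exact hlin.add (hc'.comp p hasFDerivWithinAt_snd hsnd)
  refine .of_isLittleO ((hmixed.add hfrozen.isLittleO).congr_left fun q => ?_)
  simp only [sub_apply, map_sub, sub_self, map_zero]
  abel

lemma apply_eq_zero_of_forall_add_smul_eq {f : X → E} {f' : X →L[ℝ] E} {x v : X}
    (hf : HasFDerivAt f f' x) (hconst : ∀ t : ℝ, f (x + t • v) = f x) : f' v = 0 := by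
  have hline : HasDerivAt (fun t : ℝ => f (x + t • v)) (f' v) 0 := hf.hasLineDerivAt v
  simp only [hconst] at hline
  exact hline.unique (hasDerivAt_const _ _)

lemma clm_apply_eq_zero_of_eventually_eq_const {ψ : G → X} {ψ' : G →L[ℝ] X} {w : G}
    (ℓ : X →L[ℝ] E) {e : E} (hψ : HasFDerivAt ψ ψ' w) (hconst : ∀ᶠ w' in 𝓝 w, ℓ (ψ w') = e)
    (ω : G) : ℓ (ψ' ω) = 0 := by
  have hℓψ : HasFDerivAt (fun w' => ℓ (ψ w')) (ℓ ∘L ψ') w := ℓ.hasFDerivAt.comp w hψ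
  exact DFunLike.congr_fun (hℓψ.unique ((hasFDerivAt_const e w).congr_of_eventuallyEq hconst)) ω

lemma mem_tangentSet_of_eventually_mem {M : Set X} {c : ℝ → X} {v : X}
    (hc : ContDiffAt ℝ 1 c 0) (hv : HasDerivAt c v 0) (hM : ∀ᶠ s in 𝓝 0, c s ∈ M) :
    v ∈ tangentSet M (c 0) := by
  obtain ⟨ε, hε, hball⟩ := Metric.eventually_nhds_iff_ball.1 ((hc.eventually (by simp)).and hM)
  simp only [Real.ball_eq_Ioo, zero_sub, zero_add] at hball
  exact ⟨c, ε, hε, fun s hs => (hball s hs).1.contDiffWithinAt, fun s hs => (hball s hs).2, rfl,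
    hv.hasDerivWithinAt⟩

lemma apply_eq_zero_of_mem_tangentSet {Φ : X → E} {Φ' : X →L[ℝ] E} {M : Set X} {x v : X}
    (hΦ : HasFDerivAt Φ Φ' x) (hM : ∀ z ∈ M, Φ z = 0) (hv : v ∈ tangentSet M x) : Φ' v = 0 := by
  obtain ⟨c, ε, hε, -, hcM, rfl, hcv⟩ := hv
  have hnhds : Ioo (-ε) ε ∈ 𝓝 (0 : ℝ) := Ioo_mem_nhds (neg_lt_zero.2 hε) hε
  have hΦc : HasDerivAt (fun s => Φ (c s)) (Φ' v) 0 :=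
    hΦ.comp_hasDerivAt 0 (hcv.hasDerivAt hnhds)
  refine hΦc.unique ((hasDerivAt_const 0 0).congr_of_eventuallyEq ?_)
  filter_upwards [hnhds] with s hs using hM _ (hcM s hs)

lemma exists_contDiffAt_curve_of_apply_eq_zero [CompleteSpace E] {Φ : X → E} {Φ' : X →L[ℝ] E}
    {x v : X} {Y : E →L[ℝ] X} (hΦ : ContDiffAt ℝ 1 Φ x) (hΦ' : HasFDerivAt Φ Φ' x)
    (hY : ∀ e, Φ' (Y e) = e) (hv : Φ' v = 0) :
    ∃ c : ℝ → X, ContDiffAt ℝ 1 c 0 ∧ c 0 = x ∧ HasDerivAt c v 0 ∧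
      ∀ᶠ s in 𝓝 0, Φ (c s) = Φ x := by
  let h : ℝ × E → X := fun p => x + (p.1 • v + Y p.2)
  let H : ℝ × E →L[ℝ] X := (ContinuousLinearMap.toSpanSingleton ℝ v).coprod Y
  have hh : HasFDerivAt h H 0 := H.hasFDerivAt.const_add x
  have h0 : h 0 = x := by simp [h]
  have hcd : ContDiffAt ℝ 1 (Φ ∘ h) 0 :=
    ContDiffAt.comp 0 (h0.symm ▸ hΦ) (by fun_prop)
  have hfd : fderiv ℝ (Φ ∘ h) 0 = .snd ℝ ℝ E := by
    rw [(HasFDerivAt.comp 0 (h0.symm ▸ hΦ') hh).fderiv]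
    ext <;> simp [H, hv, hY]
  have hinv : (fderiv ℝ (Φ ∘ h) 0 ∘L .inr ℝ ℝ E).IsInvertible := by
    rw [hfd]
    exact ⟨.refl ℝ E, rfl⟩
  let ψ : ℝ → E := hcd.implicitFunction one_ne_zero hinv
  have hψ : ContDiffAt ℝ 1 ψ 0 := hcd.contDiffAt_implicitFunction one_ne_zero hinv
  have hψ0 : ψ 0 = 0 := hcd.implicitFunction_apply_self one_ne_zero hinv
  have hψ' : HasDerivAt ψ 0 0 := by
    have := (hcd.hasStrictFDerivAt_implicitFunction one_ne_zero hinv).hasFDerivAt.hasDerivAt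
    simpa [hfd] using this
  refine ⟨fun s => h (s, ψ s), ?_, ?_, ?_, ?_⟩
  · fun_prop
  · simp [h, hψ0]
  · simpa [h] using
      (((hasDerivAt_id (0 : ℝ)).smul_const v).add (Y.hasFDerivAt.comp_hasDerivAt 0 hψ')).const_add x
  · filter_upwards [hcd.eventually_apply_implicitFunction one_ne_zero hinv] with s hs
    simpa [h0] using hs

lemma tangentSet_inter_eq_ker [CompleteSpace E] {Φ : X → E} {Φ' : X →L[ℝ] E} {U : Set X} {x : X}
    {Y : E →L[ℝ] X} (hU : U ∈ 𝓝 x) (hx : Φ x = 0) (hΦ : ContDiffAt ℝ 1 Φ x)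
    (hΦ' : HasFDerivAt Φ Φ' x) (hY : ∀ e, Φ' (Y e) = e) :
    tangentSet {z | z ∈ U ∧ Φ z = 0} x = {v | Φ' v = 0} := by
  refine Subset.antisymm
    (fun v => apply_eq_zero_of_mem_tangentSet hΦ' fun z hz => hz.2) fun v hv => ?_
  obtain ⟨c, hc, rfl, hcv, hcΦ⟩ := exists_contDiffAt_curve_of_apply_eq_zero hΦ hΦ' hY hv
  refine mem_tangentSet_of_eventually_mem hc hcv ?_
  filter_upwards [hc.continuousAt.eventually_mem hU, hcΦ] with s hsU hsΦ
  exact ⟨hsU, hsΦ.trans hx⟩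

end Calculus

section Evaluation

variable {E : Type*} [NormedAddCommGroup E] [NormedSpace ℝ E]

omit [NormedSpace ℝ E] in
lemma extFun_of_mem {t : ℝ} (ht : t ∈ Icc0 r) (φ : C(Icc0 r, E)) : extFun φ t = φ ⟨t, ht⟩ :=
  dif_pos ht

omit [NormedSpace ℝ E] in
lemma norm_extFun_le (φ : C(Icc0 r, E)) (t : ℝ) : ‖extFun φ t‖ ≤ ‖φ‖ := by
  by_cases ht : t ∈ Icc0 r
  · exact (extFun_of_mem ht φ).symm ▸ φ.norm_coe_le_norm ⟨t, ht⟩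
  · simp [extFun, ht]

omit [NormedSpace ℝ E] in
lemma continuousOn_extFun_prod :
    ContinuousOn (fun p : C(Icc0 r, E) × ℝ => extFun p.1 p.2) (univ ×ˢ Icc0 r) := by
  rw [continuousOn_iff_continuous_domRestrict]
  have heval : Continuous fun p : ((univ ×ˢ Icc0 r : Set (C(Icc0 r, E) × ℝ))) =>
      p.1.1 ⟨p.1.2, p.2.2⟩ := by fun_prop
  exact heval.congr fun p => (extFun_of_mem p.2.2 p.1.1).symm

/-- Evaluation at `t` of the extension by `0` of a continuous map on `[-r,0]`, as a continuous
linear map. -/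
def extFunCLM (r : ℝ) (E : Type*) [NormedAddCommGroup E] [NormedSpace ℝ E] (t : ℝ) :
    C(Icc0 r, E) →L[ℝ] E :=
  LinearMap.mkContinuous
    { toFun := fun φ => extFun φ t
      map_add' := fun φ ψ => congrFun (extFun_add φ ψ) t
      map_smul' := fun c φ => congrFun (extFun_smul c φ) t } 1
    fun φ => (norm_extFun_le φ t).trans_eq (one_mul _).symm

namespace C1

/- Without these shortcuts, instance search fails to find the operator norm on spaces of continuous
linear maps from or to `C1 r E`. -/
local instance instNormedAddCommGroup : NormedAddCommGroup (C1 r E) := inferInstance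

local instance instNormedSpace : NormedSpace ℝ (C1 r E) := inferInstance

/-- The continuous linear functional `φ ↦ φ(t)` on `C¹([-r,0],E)`. -/
def evalCLM (r : ℝ) (E : Type*) [NormedAddCommGroup E] [NormedSpace ℝ E] (t : ℝ) :
    C1 r E →L[ℝ] E :=
  extFunCLM r E t ∘L .fst ℝ _ _ ∘L (C1sub r E).subtypeL

/-- The continuous linear functional `φ ↦ φ'(t)` on `C¹([-r,0],E)`. -/
def derivCLM (r : ℝ) (E : Type*) [NormedAddCommGroup E] [NormedSpace ℝ E] (t : ℝ) :
    C1 r E →L[ℝ] E :=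
  extFunCLM r E t ∘L .snd ℝ _ _ ∘L (C1sub r E).subtypeL

lemma evalCLM_apply (t : ℝ) (φ : C1 r E) : evalCLM r E t φ = evC φ t := rfl

lemma derivCLM_apply (t : ℝ) (φ : C1 r E) : derivCLM r E t φ = dvC φ t := rfl

lemma norm_dvC_le (φ : C1 r E) (t : ℝ) : ‖dvC φ t‖ ≤ ‖φ‖ :=
  (norm_extFun_le φ.1.2 t).trans (norm_snd_le φ.1)

lemma hasDerivWithinAt_evC (φ : C1 r E) {t : ℝ} (ht : t ∈ Icc0 r) :
    HasDerivWithinAt (evC φ) (dvC φ t) (Icc0 r) t :=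
  φ.2 t ht

lemma norm_evC_sub_le (φ : C1 r E) {s t : ℝ} (hs : s ∈ Icc0 r) (ht : t ∈ Icc0 r) :
    ‖evC φ t - evC φ s‖ ≤ ‖φ‖ * ‖t - s‖ :=
  (convex_Icc (-r) 0).norm_image_sub_le_of_norm_hasDerivWithin_le
    (fun _ h => hasDerivWithinAt_evC φ h) (fun u _ => norm_dvC_le φ u) hs ht

lemma lipschitzOnWith_evalCLM : LipschitzOnWith 1 (evalCLM r E) (Icc0 r) := by
  refine .of_dist_le_mul fun t ht s hs => ?_
  rw [dist_eq_norm, dist_eq_norm, NNReal.coe_one, one_mul]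
  refine ContinuousLinearMap.opNorm_le_bound _ (norm_nonneg _) fun φ => ?_
  exact (norm_evC_sub_le φ hs ht).trans_eq (mul_comm _ _)

lemma continuousOn_dvC :
    ContinuousOn (fun p : C1 r E × ℝ => dvC p.1 p.2) (univ ×ˢ Icc0 r) :=
  continuousOn_extFun_prod.comp (f := fun p : C1 r E × ℝ => (p.1.1.2, p.2))
    (by fun_prop) fun _ hp => ⟨mem_univ _, hp.2⟩

lemma hasFDerivWithinAt_evC {p : C1 r E × ℝ} (hp : p.2 ∈ Icc0 r) :
    HasFDerivWithinAt (fun q : C1 r E × ℝ => evC q.1 q.2)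
      ((evalCLM r E p.2).coprod (.toSpanSingleton ℝ (dvC p.1 p.2))) (univ ×ˢ Icc0 r) p :=
  hasFDerivWithinAt_clm_apply_prod (lipschitzOnWith_evalCLM.continuousOn p.2 hp)
    (hasDerivWithinAt_evC p.1 hp).hasFDerivWithinAt

lemma contDiffOn_evC :
    ContDiffOn ℝ 1 (fun p : C1 r E × ℝ => evC p.1 p.2) (univ ×ˢ Icc0 r) := by
  refine contDiffOn_one_of_hasFDerivWithinAt (fun p hp => hasFDerivWithinAt_evC hp.2) ?_
  have heval : ContinuousOn (fun p : C1 r E × ℝ => evalCLM r E p.2) (univ ×ˢ Icc0 r) :=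
    lipschitzOnWith_evalCLM.continuousOn.comp continuousOn_snd fun _ hp => hp.2
  have hderiv : ContinuousOn
      (fun p : C1 r E × ℝ => ContinuousLinearMap.toSpanSingleton ℝ (dvC p.1 p.2))
      (univ ×ˢ Icc0 r) :=
    (ContinuousLinearMap.toSpanSingletonCLE (𝕜 := ℝ) (E := E)).continuous.comp_continuousOn
      continuousOn_dvC
  exact heval.continuousLinearMapCoprod hderiv

lemma dvC_eq_zero_of_evC_eq_zero {φ : C1 r E} {t : ℝ} (ht : t ∈ Ioc (-r) 0)
    (hφ : ∀ s ∈ Icc (-r) t, evC φ s = 0) : dvC φ t = 0 := by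
  have hmem : t ∈ Icc (-r) t := right_mem_Icc.2 ht.1.le
  have hsub : Icc (-r) t ⊆ Icc0 r := Icc_subset_Icc_right ht.2
  have hzero : HasDerivWithinAt (evC φ) 0 (Icc (-r) t) t :=
    (hasDerivWithinAt_const t _ 0).congr hφ (hφ t hmem)
  exact (uniqueDiffOn_Icc ht.1 t hmem).eq_deriv _
    ((hasDerivWithinAt_evC φ (hsub hmem)).mono hsub) hzero

variable {G : Type*} [NormedAddCommGroup G] [NormedSpace ℝ G]

lemma evC_fderiv_apply_eq_zero_of_vanishing {ψ : G → C1 r E} {ψ' : G →L[ℝ] C1 r E} {τ : G → ℝ}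
    {w : G} (hψ : HasFDerivAt ψ ψ' w) (hτ : DifferentiableAt ℝ τ w)
    (hτmem : ∀ᶠ w' in 𝓝 w, τ w' ∈ Icc0 r)
    (hvan : ∀ᶠ w' in 𝓝 w, ∀ t ∈ Icc (-r) (τ w'), evC (ψ w') t = 0) (ω : G) :
    evC (ψ' ω) (τ w) = 0 := by
  have hchain : HasFDerivAt (fun w' => evC (ψ w') (τ w')) _ w :=
    (hasFDerivWithinAt_evC hτmem.self_of_nhds).comp_hasFDerivAt (f := fun w' => (ψ w', τ w')) w
      (hψ.prodMk hτ.hasFDerivAt) (hτmem.mono fun _ h => ⟨mem_univ _, h⟩)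
  have hconst : (fun w' => evC (ψ w') (τ w')) =ᶠ[𝓝 w] fun _ => 0 := by
    filter_upwards [hτmem, hvan] with w' hmem h using h _ (right_mem_Icc.2 hmem.1)
  have hsum : evC (ψ' ω) (τ w) + fderiv ℝ τ w ω • dvC (ψ w) (τ w) = 0 :=
    DFunLike.congr_fun (hchain.unique ((hasFDerivAt_const 0 w).congr_of_eventuallyEq hconst)) ω
  /- If `τ w > -r`, then `ψ w` vanishes to the left of `τ w`, hence so does its derivative there; if
  `τ w = -r`, then `τ` has a minimum at `w`. -/
  suffices hdelay : fderiv ℝ τ w ω • dvC (ψ w) (τ w) = 0 by rwa [hdelay, add_zero] at hsum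
  obtain hmin | hlt := hτmem.self_of_nhds.1.eq_or_lt
  · have hlocal : IsLocalMin τ w := hτmem.mono fun _ h => hmin ▸ h.1
    rw [hlocal.fderiv_eq_zero, zero_apply, zero_smul]
  · rw [dvC_eq_zero_of_evC_eq_zero ⟨hlt, hτmem.self_of_nhds.2⟩ hvan.self_of_nhds, smul_zero]

end C1

end Evaluation

namespace Setting

attribute [local instance] C1.instNormedAddCommGroup C1.instNormedSpace

omit [FiniteDimensional ℝ F]

variable (S : Setting r n kk F) {J : Finset (Fin kk)}

/-- The continuous linear map `φ ↦ Lφ` on `C¹([-r,0],ℝⁿ)`. -/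
def LofCLM : C1 r (Fin n → ℝ) →L[ℝ] F :=
  S.L ∘L .fst ℝ _ _ ∘L (C1sub r (Fin n → ℝ)).subtypeL

lemma LofCLM_apply (φ : C1 r (Fin n → ℝ)) : S.LofCLM φ = S.Lof φ := rfl

variable {S}

lemma neg_d_mem_Icc0 (k : Fin kk) {w : F} (hw : w ∈ S.W) : -(S.d k w) ∈ Icc0 r :=
  ⟨neg_le_neg (S.d_mem k w hw).2, neg_nonpos.2 (S.d_mem k w hw).1⟩

lemma WJ_subset_WupJ : S.WJ J ⊆ S.WupJ J := fun _ hw => ⟨hw.1, hw.2.2⟩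

lemma isOpen_WupJ : IsOpen (S.WupJ J) := by
  have hpos : S.WupJ J = S.W ∩ ⋂ k ∈ (Jᶜ : Finset (Fin kk)), S.W ∩ S.d k ⁻¹' Ioi 0 := by
    ext w
    simp +contextual [WupJ]
  rw [hpos]
  refine S.Wopen.inter (isOpen_biInter_finset fun k _ => ?_)
  exact (S.d_smooth k).continuousOn.isOpen_inter_preimage S.Wopen isOpen_Ioi

lemma contDiffOn_hat : ContDiffOn ℝ 1 S.hat (S.Lof ⁻¹' S.W) := by
  refine contDiffOn_pi.2 fun k => ?_
  have hdelay : ContDiffOn ℝ 1 (fun φ => (φ, -(S.d k (S.Lof φ)))) (S.Lof ⁻¹' S.W) :=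
    contDiffOn_id.prodMk
      ((S.d_smooth k).comp S.LofCLM.contDiff.contDiffOn fun _ hφ => hφ).neg
  exact C1.contDiffOn_evC.comp hdelay fun _ hφ => ⟨mem_univ _, neg_d_mem_Icc0 k hφ⟩

lemma isOpen_U : IsOpen S.U :=
  contDiffOn_hat.continuousOn.isOpen_inter_preimage (S.Wopen.preimage S.LofCLM.continuous) S.Vopen

lemma isOpen_UupJ : IsOpen (S.UupJ J) :=
  isOpen_U.inter (isOpen_WupJ.preimage S.LofCLM.continuous)

lemma contDiffOn_fmap : ContDiffOn ℝ 1 S.fmap S.U :=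
  S.g_smooth.comp (contDiffOn_hat.mono fun _ hφ => hφ.1) fun _ hφ => hφ.2

lemma contDiffAt_fmap {φ : C1 r (Fin n → ℝ)} (hφ : φ ∈ S.U) : ContDiffAt ℝ 1 S.fmap φ :=
  contDiffOn_fmap.contDiffAt (isOpen_U.mem_nhds hφ)

lemma hasFDerivAt_fmap {φ : C1 r (Fin n → ℝ)} (hφ : φ ∈ S.U) :
    HasFDerivAt S.fmap (fderiv ℝ S.fmap φ) φ :=
  ((contDiffAt_fmap hφ).differentiableAt one_ne_zero).hasFDerivAt

variable (S)

/-- The directions `ζ ∈ C¹([-r,0],ℝⁿ)` with `Lζ = 0` which vanish at all delayed arguments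
`-d_k(w)`; moving along them from `φ` with `Lφ = w` changes neither `Lφ` nor `φ̂`. -/
def silent (w : F) : Submodule ℝ (C1 r (Fin n → ℝ)) :=
  S.LofCLM.ker ⊓ ⨅ k, (C1.evalCLM r (Fin n → ℝ) (-(S.d k w))).ker

variable {S}

lemma mem_silent {w : F} {ζ : C1 r (Fin n → ℝ)} :
    ζ ∈ S.silent w ↔ S.Lof ζ = 0 ∧ ∀ k, evC ζ (-(S.d k w)) = 0 := by
  simp [silent, LofCLM_apply, C1.evalCLM_apply]

lemma Lof_add_of_mem_silent {w : F} {φ ζ : C1 r (Fin n → ℝ)} (hζ : ζ ∈ S.silent w) :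
    S.Lof (φ + ζ) = S.Lof φ := by
  rw [← LofCLM_apply, map_add, LofCLM_apply, LofCLM_apply, (mem_silent.1 hζ).1, add_zero]

lemma fmap_add_of_mem_silent {φ ζ : C1 r (Fin n → ℝ)} (hζ : ζ ∈ S.silent (S.Lof φ)) :
    S.fmap (φ + ζ) = S.fmap φ := by
  have hhat : S.hat (φ + ζ) = S.hat φ := funext fun k => by
    rw [hat, hat, Lof_add_of_mem_silent hζ, ← C1.evalCLM_apply, map_add, C1.evalCLM_apply,
      C1.evalCLM_apply, (mem_silent.1 hζ).2 k, add_zero]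
  rw [fmap, fmap, hhat]

lemma fderiv_fmap_of_mem_silent {φ ζ : C1 r (Fin n → ℝ)} (hφ : φ ∈ S.U)
    (hζ : ζ ∈ S.silent (S.Lof φ)) : fderiv ℝ S.fmap φ ζ = 0 :=
  apply_eq_zero_of_forall_add_smul_eq (hasFDerivAt_fmap hφ) fun t =>
    fmap_add_of_mem_silent (Submodule.smul_mem _ t hζ)

variable (S)

/-- The families of linear maps `Y(w) : ℝⁿ → C¹([-r,0],ℝⁿ)`, `w ∈ W^J`, with which a given `φ'(0)`
can be corrected to any other value, keeping `φ(0)`, `Lφ` and the values of `φ` at and before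
`-d_k(w)` for all `k ∉ J`. The family `w ↦ Y_J(w)` is one. -/
structure IsDerivativeCorrector (J : Finset (Fin kk))
    (Y : F → (Fin n → ℝ) →L[ℝ] C1 r (Fin n → ℝ)) : Prop where
  differentiableOn : DifferentiableOn ℝ Y (S.WupJ J)
  evC_zero : ∀ w ∈ S.WupJ J, ∀ x, evC (Y w x) 0 = 0
  dvC_zero : ∀ w ∈ S.WupJ J, ∀ x, dvC (Y w x) 0 = x
  Lof_eq_zero : ∀ w ∈ S.WupJ J, ∀ x, S.Lof (Y w x) = 0
  evC_eq_zero : ∀ w ∈ S.WupJ J, ∀ k ∉ J, ∀ t ∈ Icc (-r) (-(S.d k w)), ∀ x, evC (Y w x) t = 0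

/-- The map `φ ↦ φ - Y(Lφ)·φ'(0)`, for a family `Y` of linear maps; it is `R^J` for `Y = Y_J`. -/
def reduction (Y : F → (Fin n → ℝ) →L[ℝ] C1 r (Fin n → ℝ)) (φ : C1 r (Fin n → ℝ)) :
    C1 r (Fin n → ℝ) :=
  φ - Y (S.Lof φ) (dvC φ 0)

/-- The map `ψ ↦ ψ + Y(Lψ)·f(ψ)`, which inverts `reduction` on `X_{fJ}`. -/
def unreduction (Y : F → (Fin n → ℝ) →L[ℝ] C1 r (Fin n → ℝ)) (ψ : C1 r (Fin n → ℝ)) :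
    C1 r (Fin n → ℝ) :=
  ψ + Y (S.Lof ψ) (S.fmap ψ)

variable {S}

namespace IsDerivativeCorrector

variable {Y : F → (Fin n → ℝ) →L[ℝ] C1 r (Fin n → ℝ)} (hY : S.IsDerivativeCorrector J Y)
  {w : F} {φ : C1 r (Fin n → ℝ)}
include hY

lemma hasFDerivAt (hw : w ∈ S.WupJ J) : HasFDerivAt Y (fderiv ℝ Y w) w :=
  (hY.differentiableOn.differentiableAt (isOpen_WupJ.mem_nhds hw)).hasFDerivAt

lemma hasFDerivAt_apply (hw : w ∈ S.WupJ J) (x : Fin n → ℝ) :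
    HasFDerivAt (fun w' => Y w' x) ((fderiv ℝ Y w).flip x) w :=
  (ContinuousLinearMap.apply ℝ (C1 r (Fin n → ℝ)) x).hasFDerivAt.comp w (hY.hasFDerivAt hw)

lemma apply_mem_silent (hw : w ∈ S.WJ J) (x : Fin n → ℝ) : Y w x ∈ S.silent w := by
  have hw' := WJ_subset_WupJ hw
  refine mem_silent.2 ⟨hY.Lof_eq_zero w hw' x, fun k => ?_⟩
  by_cases hk : k ∈ J
  · rw [hw.2.1 k hk, neg_zero, hY.evC_zero w hw' x]
  · exact hY.evC_eq_zero w hw' k hk _ (right_mem_Icc.2 (neg_d_mem_Icc0 k hw.1).1) x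

lemma clm_fderiv_apply_eq_zero {G : Type*} [NormedAddCommGroup G] [NormedSpace ℝ G]
    (ℓ : C1 r (Fin n → ℝ) →L[ℝ] G) {x : Fin n → ℝ} {e : G} (hw : w ∈ S.WupJ J)
    (hconst : ∀ w' ∈ S.WupJ J, ℓ (Y w' x) = e) (ω : F) : ℓ (fderiv ℝ Y w ω x) = 0 :=
  clm_apply_eq_zero_of_eventually_eq_const ℓ (hY.hasFDerivAt_apply hw x)
    (eventually_of_mem (isOpen_WupJ.mem_nhds hw) hconst) ω

lemma Lof_fderiv_apply (hw : w ∈ S.WupJ J) (x : Fin n → ℝ) (ω : F) :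
    S.Lof (fderiv ℝ Y w ω x) = 0 :=
  hY.clm_fderiv_apply_eq_zero S.LofCLM hw (fun w' hw' => hY.Lof_eq_zero w' hw' x) ω

lemma dvC_fderiv_apply (hw : w ∈ S.WupJ J) (x : Fin n → ℝ) (ω : F) :
    dvC (fderiv ℝ Y w ω x) 0 = 0 :=
  hY.clm_fderiv_apply_eq_zero (C1.derivCLM r _ 0) hw (fun w' hw' => hY.dvC_zero w' hw' x) ω

lemma evC_fderiv_apply_neg_d (hw : w ∈ S.WupJ J) {k : Fin kk} (hk : k ∉ J) (x : Fin n → ℝ)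
    (ω : F) : evC (fderiv ℝ Y w ω x) (-(S.d k w)) = 0 := by
  have hWupJ : S.WupJ J ∈ 𝓝 w := isOpen_WupJ.mem_nhds hw
  have hd : DifferentiableAt ℝ (fun w' => -(S.d k w')) w :=
    (((S.d_smooth k).contDiffAt (S.Wopen.mem_nhds hw.1)).differentiableAt one_ne_zero).neg
  refine C1.evC_fderiv_apply_eq_zero_of_vanishing (hY.hasFDerivAt_apply hw x) hd ?_ ?_ ω
  · exact eventually_of_mem hWupJ fun w' hw' => neg_d_mem_Icc0 k hw'.1
  · exact eventually_of_mem hWupJ fun w' hw' t ht => hY.evC_eq_zero w' hw' k hk t ht x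

lemma fderiv_apply_mem_silent (hw : w ∈ S.WJ J) (x : Fin n → ℝ) (ω : F) :
    fderiv ℝ Y w ω x ∈ S.silent w := by
  have hw' := WJ_subset_WupJ hw
  refine mem_silent.2 ⟨hY.Lof_fderiv_apply hw' x ω, fun k => ?_⟩
  by_cases hk : k ∈ J
  · rw [hw.2.1 k hk, neg_zero]
    exact hY.clm_fderiv_apply_eq_zero (C1.evalCLM r _ 0) hw'
      (fun w' hw' => hY.evC_zero w' hw' x) ω
  · exact hY.evC_fderiv_apply_neg_d hw' hk x ω

lemma leftInvOn_unreduction : LeftInvOn (S.unreduction Y) (S.reduction Y) (S.XfJ J) := by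
  intro φ hφ
  have hsilent : -Y (S.Lof φ) (dvC φ 0) ∈ S.silent (S.Lof φ) :=
    Submodule.neg_mem _ (hY.apply_mem_silent hφ.2.2 _)
  rw [unreduction, reduction, sub_eq_add_neg, Lof_add_of_mem_silent hsilent,
    fmap_add_of_mem_silent hsilent, ← hφ.1.2, neg_add_cancel_right]

lemma fderiv_reduction (hφ : S.Lof φ ∈ S.WupJ J) :
    fderiv ℝ (S.reduction Y) φ = ContinuousLinearMap.id ℝ (C1 r (Fin n → ℝ)) -
      (Y (S.Lof φ) ∘L C1.derivCLM r (Fin n → ℝ) 0 +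
        (fderiv ℝ Y (S.Lof φ) ∘L S.LofCLM).flip (dvC φ 0)) :=
  have hYL : HasFDerivAt (fun ψ => Y (S.Lof ψ)) (fderiv ℝ Y (S.Lof φ) ∘L S.LofCLM) φ :=
    (hY.hasFDerivAt hφ).comp φ S.LofCLM.hasFDerivAt
  ((hasFDerivAt_id φ).sub (hYL.clm_apply (C1.derivCLM r (Fin n → ℝ) 0).hasFDerivAt)).fderiv

lemma tangentSet_Xf (hφ : φ ∈ S.XfJ J) :
    tangentSet S.Xf φ =
      {χ | C1.derivCLM r (Fin n → ℝ) 0 χ = fderiv ℝ S.fmap φ χ} := by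
  have hXf : S.Xf = {ψ | ψ ∈ S.U ∧ C1.derivCLM r (Fin n → ℝ) 0 ψ - S.fmap ψ = 0} := by
    simp only [Xf, C1.derivCLM_apply, sub_eq_zero]
  have hφ0 : C1.derivCLM r (Fin n → ℝ) 0 φ - S.fmap φ = 0 := sub_eq_zero.2 hφ.1.2
  have hright : ∀ x, (C1.derivCLM r (Fin n → ℝ) 0 - fderiv ℝ S.fmap φ) (Y (S.Lof φ) x) = x := by
    intro x
    rw [sub_apply, C1.derivCLM_apply, hY.dvC_zero _ (WJ_subset_WupJ hφ.2.2),
      fderiv_fmap_of_mem_silent hφ.1.1 (hY.apply_mem_silent hφ.2.2 x), sub_zero]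
  rw [hXf, tangentSet_inter_eq_ker (isOpen_U.mem_nhds hφ.1.1) hφ0
    ((C1.derivCLM r (Fin n → ℝ) 0).contDiff.contDiffAt.sub (contDiffAt_fmap hφ.1.1))
    ((C1.derivCLM r (Fin n → ℝ) 0).hasFDerivAt.sub (hasFDerivAt_fmap hφ.1.1)) hright]
  simp only [sub_apply, sub_eq_zero]

lemma exists_continuous_inverse (hφ : φ ∈ S.XfJ J) :
    ∃ σ : C1 r (Fin n → ℝ) →L[ℝ] C1 r (Fin n → ℝ),
      InvOn σ (fderiv ℝ (S.reduction Y) φ) (tangentSet S.Xf φ) (X0sub r n) ∧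
      MapsTo (fderiv ℝ (S.reduction Y) φ) (tangentSet S.Xf φ) (X0sub r n) ∧
      MapsTo σ (X0sub r n) (tangentSet S.Xf φ) := by
  have hW := hφ.2.2
  have hWup := WJ_subset_WupJ hW
  have hδA : ∀ x, C1.derivCLM r _ 0 (Y (S.Lof φ) x) = x := hY.dvC_zero _ hWup
  have hDA : ∀ x, fderiv ℝ S.fmap φ (Y (S.Lof φ) x) = 0 := fun x =>
    fderiv_fmap_of_mem_silent hφ.1.1 (hY.apply_mem_silent hW x)
  let B := (fderiv ℝ Y (S.Lof φ) ∘L S.LofCLM).flip (dvC φ 0)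
  have hB : ∀ χ, B χ = fderiv ℝ Y (S.Lof φ) (S.Lof χ) (dvC φ 0) := fun _ => rfl
  have hB_of_Lof : ∀ χ, S.Lof χ = 0 → B χ = 0 := fun χ hχ => by
    rw [hB, hχ, map_zero, zero_apply]
  have hδB : ∀ χ, C1.derivCLM r _ 0 (B χ) = 0 := fun χ => hY.dvC_fderiv_apply hWup _ _
  have hDB : ∀ χ, fderiv ℝ S.fmap φ (B χ) = 0 := fun χ =>
    fderiv_fmap_of_mem_silent hφ.1.1 (hY.fderiv_apply_mem_silent hW _ _)
  have hBA : ∀ x, B (Y (S.Lof φ) x) = 0 := fun x => hB_of_Lof _ (hY.Lof_eq_zero _ hWup x)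
  have hBB : ∀ χ, B (B χ) = 0 := fun χ => hB_of_Lof _ (hY.Lof_fderiv_apply hWup _ _)
  rw [hY.fderiv_reduction hWup, hY.tangentSet_Xf hφ]
  exact ⟨_, invOn_id_add_id_sub hδA hDA hδB hDB hBA hBB, mapsTo_id_sub hδA hδB _,
    mapsTo_id_add hδA hDA hδB hDB⟩

end IsDerivativeCorrector

end Setting

section Columns

attribute [local instance] C1.instNormedAddCommGroup C1.instNormedSpace

lemma sCLM_apply (ν : Fin n) (x : ℝ) : sCLM n ν x = Pi.single ν x := by
  ext j
  rw [sCLM, ContinuousLinearMap.pi_apply, Pi.single_apply]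
  split_ifs <;> rfl

lemma norm_CMsingle_le (ν : Fin n) (φ : C(Icc0 r, ℝ)) : ‖CMsingle ν φ‖ ≤ ‖sCLM n ν‖ * ‖φ‖ :=
  (ContinuousMap.norm_le _ (by positivity)).2 fun t =>
    (sCLM n ν).le_opNorm_of_le (φ.norm_coe_le_norm t)

/-- The map `ψ ↦ ψ · e_ν` as a continuous linear map `C¹([-r,0],ℝ) → C¹([-r,0],ℝⁿ)`. -/
def singleC1CLM (r : ℝ) (ν : Fin n) : C1 r ℝ →L[ℝ] C1 r (Fin n → ℝ) :=
  LinearMap.mkContinuous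
    { toFun := singleC1 ν
      map_add' := fun φ ψ => Subtype.ext <| Prod.ext
        (ContinuousMap.ext fun _ => map_add (sCLM n ν) _ _)
        (ContinuousMap.ext fun _ => map_add (sCLM n ν) _ _)
      map_smul' := fun c φ => Subtype.ext <| Prod.ext
        (ContinuousMap.ext fun _ => map_smul (sCLM n ν) c _)
        (ContinuousMap.ext fun _ => map_smul (sCLM n ν) c _) } ‖sCLM n ν‖
    fun φ => max_le
      ((norm_CMsingle_le ν φ.1.1).trans (by gcongr; exact norm_fst_le φ.1))
      ((norm_CMsingle_le ν φ.1.2).trans (by gcongr; exact norm_snd_le φ.1))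

/-- The map `x ↦ Σ_ν x_ν ψ_ν · e_ν` of `Ymap`, as a continuous linear map. -/
def YmapCLM (ψ : Fin n → C1 r ℝ) : (Fin n → ℝ) →L[ℝ] C1 r (Fin n → ℝ) :=
  ∑ ν, (ContinuousLinearMap.proj ν).smulRight (singleC1CLM r ν (ψ ν))

lemma YmapCLM_apply (ψ : Fin n → C1 r ℝ) (x : Fin n → ℝ) : YmapCLM ψ x = Ymap ψ x := by
  simp only [YmapCLM, sum_apply]
  rfl

lemma map_YmapCLM {G : Type*} [NormedAddCommGroup G] [NormedSpace ℝ G]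
    (ℓ : C1 r (Fin n → ℝ) →L[ℝ] G) (ψ : Fin n → C1 r ℝ) (x : Fin n → ℝ) :
    ℓ (YmapCLM ψ x) = ∑ ν, x ν • ℓ (singleC1 ν (ψ ν)) := by
  simp only [YmapCLM, sum_apply, map_sum, ContinuousLinearMap.smulRight_apply, map_smul]
  rfl

lemma sum_smul_sCLM (x a : Fin n → ℝ) : ∑ ν, x ν • sCLM n ν (a ν) = x * a := by
  simp only [sCLM_apply, ← Pi.single_smul, smul_eq_mul]
  exact Finset.univ_sum_single (x * a)

lemma evC_YmapCLM (ψ : Fin n → C1 r ℝ) (x : Fin n → ℝ) (t : ℝ) :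
    evC (YmapCLM ψ x) t = x * fun ν => evC (ψ ν) t := by
  rw [← C1.evalCLM_apply, map_YmapCLM, ← sum_smul_sCLM]
  simp only [C1.evalCLM_apply, evC, singleC1, extFun_CMsingle]

lemma dvC_YmapCLM (ψ : Fin n → C1 r ℝ) (x : Fin n → ℝ) (t : ℝ) :
    dvC (YmapCLM ψ x) t = x * fun ν => dvC (ψ ν) t := by
  rw [← C1.derivCLM_apply, map_YmapCLM, ← sum_smul_sCLM]
  simp only [C1.derivCLM_apply, dvC, singleC1, extFun_CMsingle]

lemma differentiableOn_YmapCLM {G : Type*} [NormedAddCommGroup G] [NormedSpace ℝ G]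
    {y : Fin n → G → C1 r ℝ} {s : Set G} (hy : ∀ ν, DifferentiableOn ℝ (y ν) s) :
    DifferentiableOn ℝ (fun w => YmapCLM fun ν => y ν w) s :=
  .fun_sum fun ν _ => ((ContinuousLinearMap.smulRightL ℝ (Fin n → ℝ) (C1 r (Fin n → ℝ))
    (.proj ν)) ∘L singleC1CLM r ν).differentiable.comp_differentiableOn (hy ν)

end Columns

namespace Setting

omit [FiniteDimensional ℝ F]

variable {S : Setting r n kk F} {J : Finset (Fin kk)}

lemma isDerivativeCorrector_YmapCLM {y : Fin n → F → C1 r ℝ}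
    (hy_diff : ∀ ν, DifferentiableOn ℝ (y ν) (S.WupJ J))
    (hy0 : ∀ ν, ∀ w ∈ S.WupJ J, evC (y ν w) 0 = 0)
    (hy1 : ∀ ν, ∀ w ∈ S.WupJ J, dvC (y ν w) 0 = 1)
    (hyL : ∀ ν, ∀ w ∈ S.WupJ J, S.Lof (singleC1 ν (y ν w)) = 0)
    (hyvan : ∀ ν, ∀ w ∈ S.WupJ J, ∀ k ∉ J, ∀ t ∈ Icc (-r) (-(S.d k w)), evC (y ν w) t = 0) :
    S.IsDerivativeCorrector J fun w => YmapCLM fun ν => y ν w where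
  differentiableOn := differentiableOn_YmapCLM hy_diff
  evC_zero w hw x := by
    ext ν
    simp [evC_YmapCLM, hy0 ν w hw]
  dvC_zero w hw x := by
    ext ν
    simp [dvC_YmapCLM, hy1 ν w hw]
  Lof_eq_zero w hw x := by
    rw [← LofCLM_apply, map_YmapCLM]
    exact Finset.sum_eq_zero fun ν _ => by rw [LofCLM_apply, hyL ν w hw, smul_zero]
  evC_eq_zero w hw k hk t ht x := by
    ext ν
    simp [evC_YmapCLM, hyvan ν w hw k hk t ht]

lemma reduction_YmapCLM (S : Setting r n kk F) (y : Fin n → F → C1 r ℝ) :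
    S.reduction (fun w => YmapCLM fun ν => y ν w) = S.RJmap y :=
  funext fun φ => congrArg (φ - ·) (YmapCLM_apply _ _)

end Setting

omit [FiniteDimensional ℝ F] in
theorem statement12_general (S : Setting r n kk F) (J : Finset (Fin kk)) (y : Fin n → F → C1 r ℝ)
    (hy_diff : ∀ ν, DifferentiableOn ℝ (y ν) (S.WupJ J))
    (hy0 : ∀ ν, ∀ w ∈ S.WupJ J, evC (y ν w) 0 = 0)
    (hy1 : ∀ ν, ∀ w ∈ S.WupJ J, dvC (y ν w) 0 = 1)
    (hyL : ∀ ν, ∀ w ∈ S.WupJ J, S.L (singleC1 ν (y ν w)).1.1 = 0)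
    (hyvan : ∀ ν, ∀ w ∈ S.WupJ J, ∀ k ∉ J, ∀ t ∈ Set.Icc (-r) (-(S.d k w)),
      evC (y ν w) t = 0) :
    Set.InjOn (S.RJmap y) (S.XfJ J) ∧
    ∀ φ ∈ S.XfJ J,
      Set.BijOn (fderivWithin ℝ (S.RJmap y) (S.UupJ J) φ) (tangentSet S.Xf φ)
        (X0sub r n : Set (C1 r (Fin n → ℝ))) ∧
      ∃ σ : C1 r (Fin n → ℝ) → C1 r (Fin n → ℝ),
        ContinuousOn σ (X0sub r n : Set (C1 r (Fin n → ℝ))) ∧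
        Set.InvOn σ (fderivWithin ℝ (S.RJmap y) (S.UupJ J) φ) (tangentSet S.Xf φ)
          (X0sub r n : Set (C1 r (Fin n → ℝ))) := by
  have hY := Setting.isDerivativeCorrector_YmapCLM hy_diff hy0 hy1 hyL hyvan
  rw [← S.reduction_YmapCLM y]
  refine ⟨hY.leftInvOn_unreduction.injOn, fun φ hφ => ?_⟩
  have hU : φ ∈ S.UupJ J := ⟨hφ.1.1, Setting.WJ_subset_WupJ hφ.2.2⟩
  rw [fderivWithin_of_isOpen Setting.isOpen_UupJ hU]
  obtain ⟨σ, hinv, hmaps, hmaps'⟩ := hY.exists_continuous_inverse hφ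
  exact ⟨hinv.bijOn hmaps hmaps', σ, σ.continuous.continuousOn, hinv⟩

/-- Proposition 4.4: `R^J` is injective on `X_{fJ}`, and for `φ ∈ X_{fJ}` the derivative
`DR^J(φ)` defines a (topological) isomorphism from `T_φX_f` onto `X₀`. -/
theorem statement12 (hr : 0 < r) (S : Setting r n kk F)
    (J : Finset (Fin kk)) (hJ : J ≠ Finset.univ) (hUJ : (S.UJ J).Nonempty)
    (y : Fin n → F → C1 r ℝ)
    (hy_smooth : ∀ ν, ContDiffOn ℝ 1 (y ν) (S.WupJ J))
    (hy0 : ∀ ν, ∀ w ∈ S.WupJ J, evC (y ν w) 0 = 0)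
    (hy1 : ∀ ν, ∀ w ∈ S.WupJ J, dvC (y ν w) 0 = 1)
    (hyL : ∀ ν, ∀ w ∈ S.WupJ J, S.L (singleC1 ν (y ν w)).1.1 = 0)
    (hyvan : ∀ ν, ∀ w ∈ S.WupJ J, ∀ k ∉ J, ∀ t ∈ Set.Icc (-r) (-(S.d k w)),
      evC (y ν w) t = 0) :
    Set.InjOn (S.RJmap y) (S.XfJ J) ∧
    ∀ φ ∈ S.XfJ J,
      Set.BijOn (fderivWithin ℝ (S.RJmap y) (S.UupJ J) φ) (tangentSet S.Xf φ)
        (X0sub r n : Set (C1 r (Fin n → ℝ))) ∧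
      ∃ σ : C1 r (Fin n → ℝ) → C1 r (Fin n → ℝ),
        ContinuousOn σ (X0sub r n : Set (C1 r (Fin n → ℝ))) ∧
        Set.InvOn σ (fderivWithin ℝ (S.RJmap y) (S.UupJ J) φ) (tangentSet S.Xf φ)
          (X0sub r n : Set (C1 r (Fin n → ℝ))) := by
  exact statement12_general S J y (fun ν => (hy_smooth ν).differentiableOn one_ne_zero) hy0 hy1 hyL
    hyvan
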